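/- Let A ∈ ℂ^{m×n}, let Ṽ ∈ ℂ^{n×n} be invertible, let Λ̃ ∈ ℝ^{n×n} be diagonal with strictly positive diagonal entries, let Σ̃ = Λ̃^{1/2} be the diagonal matrix of positive square roots, and let E = A*A − Ṽ Λ̃ Ṽ*. Then the matrix Ũ = A Ṽ^{−*} Σ̃^{−1} satisfies Ũ* Ũ = I + Σ̃^{−1} Ṽ^{−1} E Ṽ^{−*} Σ̃^{−1}, and consequently ‖I − Ũ* Ũ‖ ≤ ‖Σ̃^{−1}‖² · ‖Ṽ^{−1}‖² · ‖E‖. -/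

import Mathlib

/-!
Write `D = diagonal d = S * S`, so that `Aᴴ * A = E + V * (S * S) * Vᴴ`. Since `S` is Hermitian,
`Uᴴ * U = S⁻¹ * V⁻¹ * (Aᴴ * A) * (V⁻¹)ᴴ * S⁻¹`; the `V * (S * S) * Vᴴ` part cancels to the identity
and the `E` part is the claimed correction. The norm bound follows because the spectral norm is
Mathlib's `L2` operator norm, which is submultiplicative and invariant under `ᴴ`.
-/


open Matrix

/-- The spectral norm (largest singular value) of a matrix. -/
noncomputable def specNorm {𝕜 : Type*} [RCLike 𝕜] {p q : Type*} [Fintype p] [Fintype q]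
    [DecidableEq q] (A : Matrix p q 𝕜) : ℝ :=
  ‖LinearMap.toContinuousLinearMap (Matrix.toEuclideanLin A)‖

theorem specNorm_mul_le {n : ℕ} (X Y : Matrix (Fin n) (Fin n) ℂ) :
    specNorm (X * Y) ≤ specNorm X * specNorm Y :=
  Matrix.l2_opNorm_mul X Y

theorem specNorm_conjTranspose {n : ℕ} (X : Matrix (Fin n) (Fin n) ℂ) :
    specNorm Xᴴ = specNorm X :=
  Matrix.l2_opNorm_conjTranspose X

theorem specNorm_neg {n : ℕ} (X : Matrix (Fin n) (Fin n) ℂ) :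
    specNorm (-X) = specNorm X := by
  simp [specNorm]

theorem specNorm_nonneg {n : ℕ} (X : Matrix (Fin n) (Fin n) ℂ) : 0 ≤ specNorm X :=
  norm_nonneg _

theorem stmt_17 {M N : ℕ} (A : Matrix (Fin M) (Fin N) ℂ)
    (V : Matrix (Fin N) (Fin N) ℂ) (hV : IsUnit V)
    (d : Fin N → ℝ) (hd : ∀ i, 0 < d i)
    (S : Matrix (Fin N) (Fin N) ℂ)
    (hS : S = Matrix.diagonal fun i => (Real.sqrt (d i) : ℂ))
    (E : Matrix (Fin N) (Fin N) ℂ)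
    (hE : E = Aᴴ * A - V * Matrix.diagonal (fun i => ((d i : ℝ) : ℂ)) * Vᴴ)
    (U : Matrix (Fin M) (Fin N) ℂ)
    (hU : U = A * (V⁻¹)ᴴ * S⁻¹) :
    Uᴴ * U = 1 + S⁻¹ * V⁻¹ * E * (V⁻¹)ᴴ * S⁻¹ ∧
    specNorm (1 - Uᴴ * U) ≤ specNorm S⁻¹ ^ 2 * specNorm V⁻¹ ^ 2 * specNorm E := by
  have hSS : Matrix.diagonal (fun i => ((d i : ℝ) : ℂ)) = S * S := by
    rw [hS, Matrix.diagonal_mul_diagonal]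
    congr 1
    funext i
    rw [← Complex.ofReal_mul, Real.mul_self_sqrt (hd i).le]
  have hSu : IsUnit S.det := by
    rw [hS, Matrix.det_diagonal, isUnit_iff_ne_zero, Finset.prod_ne_zero_iff]
    intro i _
    exact_mod_cast (Real.sqrt_pos.2 (hd i)).ne'
  have hVu : IsUnit V.det := (Matrix.isUnit_iff_isUnit_det V).1 hV
  have hSH : Sᴴ = S := by
    rw [hS, Matrix.diagonal_conjTranspose]
    congr 1
    funext i
    simp
  have hSiH : (S⁻¹)ᴴ = S⁻¹ := by rw [Matrix.conjTranspose_nonsing_inv, hSH]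
  have hVH : Vᴴ * (V⁻¹)ᴴ = 1 := by
    rw [← Matrix.conjTranspose_mul, Matrix.nonsing_inv_mul V hVu, Matrix.conjTranspose_one]
  have hAA : Aᴴ * A = V * (S * S) * Vᴴ + E := by rw [hE, hSS]; abel
  have hcancel : S⁻¹ * V⁻¹ * (V * (S * S) * Vᴴ) * (V⁻¹)ᴴ * S⁻¹ = 1 := by
    calc S⁻¹ * V⁻¹ * (V * (S * S) * Vᴴ) * (V⁻¹)ᴴ * S⁻¹
        = S⁻¹ * (V⁻¹ * V) * S * S * (Vᴴ * (V⁻¹)ᴴ) * S⁻¹ := by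
          simp only [Matrix.mul_assoc]
      _ = 1 := by
          rw [hVH, Matrix.nonsing_inv_mul V hVu, Matrix.mul_one, Matrix.mul_one,
            Matrix.nonsing_inv_mul S hSu, Matrix.one_mul, Matrix.mul_nonsing_inv S hSu]
  have key : Uᴴ * U = 1 + S⁻¹ * V⁻¹ * E * (V⁻¹)ᴴ * S⁻¹ := by
    calc Uᴴ * U = S⁻¹ * V⁻¹ * (Aᴴ * A) * (V⁻¹)ᴴ * S⁻¹ := by
          rw [hU, Matrix.conjTranspose_mul, Matrix.conjTranspose_mul,
            Matrix.conjTranspose_conjTranspose, hSiH]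
          simp only [Matrix.mul_assoc]
      _ = _ := by
          rw [hAA, Matrix.mul_add, Matrix.add_mul, Matrix.add_mul, hcancel]
  refine ⟨key, ?_⟩
  rw [key, sub_add_cancel_left, specNorm_neg]
  have hs := specNorm_nonneg S⁻¹
  have hv := specNorm_nonneg V⁻¹
  have he := specNorm_nonneg E
  have h1 := specNorm_mul_le (S⁻¹ * V⁻¹ * E * (V⁻¹)ᴴ) S⁻¹
  have h2 := specNorm_mul_le (S⁻¹ * V⁻¹ * E) (V⁻¹)ᴴ
  rw [specNorm_conjTranspose] at h2
  have h3 := specNorm_mul_le (S⁻¹ * V⁻¹) E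
  have h4 := specNorm_mul_le S⁻¹ V⁻¹
  have h5 := h3.trans (mul_le_mul_of_nonneg_right h4 he)
  have h6 := h2.trans (mul_le_mul_of_nonneg_right h5 hv)
  have h7 := h1.trans (mul_le_mul_of_nonneg_right h6 hs)
  exact h7.trans_eq (by ring)
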